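/- Fix an integer k ≥ 1 and a : Fin k → ℂ with Im(a j) ≥ 0 for every j and k·(a j) ∈ ℤ for at least one j. Let Ω := {z : Fin k → ℂ : for every j, (j+1) + z j is not a real number ≤ 0}. Then there exists a function G : (Fin k → ℂ) × ℂ → ℂ that is analytic on Ω × ℂ, satisfies G(z, s) = (s − 1) · Σ_{n=1}^∞ exp(2πi·n·a_{ι(n)}) · (n + z_{ι(n)})^{−s} (principal-branch powers) for every z ∈ Ω and every s with Re s > 1, and satisfies G(z, 1) = (1/k)·Σ_{j ∈ Fin k, k·(a j) ∈ ℤ} exp(2πi·(j+1)·(a j)) for every z ∈ Ω. In other words, for every z ∈ Ω the function ζ_k(a, z, ·) extends meromorphically to ℂ with a single simple pole at s = 1 whose residue (1/k)·Σ_{a_j ∈ ℤ[1/k]} e^{2πi j a_j} is independent of z. -/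

import Mathlib

open Complex MeasureTheory Set Filter Topology

theorem kernel_analytic {X : Type*} [TopologicalSpace X] [CompactSpace X] [MeasurableSpace X]
    [BorelSpace X] (μ : Measure X) [IsFiniteMeasure μ] (g ζ σ : C(X, ℂ)) (w0 s0 : ℂ)
    (hζ : ∀ x, ζ x ≠ w0) (hσ : ∀ x, σ x ≠ s0) :
    AnalyticAt ℂ (fun p : ℂ × ℂ => ∫ x, (ζ x - p.1)⁻¹ * (σ x - p.2)⁻¹ * g x ∂μ) (w0, s0) := by
  have hIntg : ∀ f : C(X, ℂ), Integrable (fun x => f x) μ := fun f =>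
    f.continuous.integrable_of_hasCompactSupport (HasCompactSupport.of_compactSpace _)
  let L : C(X, ℂ) →L[ℂ] ℂ := LinearMap.mkContinuous
    { toFun := fun f => ∫ x, f x ∂μ
      map_add' := fun f g => by
        simpa using integral_add (hIntg f) (hIntg g)
      map_smul' := fun c f => by
        simpa using integral_const_mul c (fun x => f x) }
    (μ.real univ) (fun f => by
      have := norm_integral_le_of_norm_le_const (μ := μ) (f := fun x => f x) (C := ‖f‖)
        (Eventually.of_forall fun x => f.norm_coe_le_norm x)
      simpa [mul_comm] using this)
  have inv1 : ∀ (η : C(X, ℂ)) (c : ℂ), (∀ x, η x ≠ c) → ∀ x,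
      (Ring.inverse (η - c • (1 : C(X, ℂ)))) x = (η x - c)⁻¹ := by
    intro η c h x
    have hu : IsUnit (η - c • (1 : C(X, ℂ))) := by
      rw [ContinuousMap.isUnit_iff_forall_ne_zero]
      intro y; simpa [sub_eq_zero] using h y
    have := Ring.mul_inverse_cancel _ hu
    have := congrArg (fun f : C(X, ℂ) => f x) this
    simp at this
    exact eq_inv_of_mul_eq_one_right this
  have an1 : ∀ (η : C(X, ℂ)) (c : ℂ), (∀ x, η x ≠ c) →
      AnalyticAt ℂ (fun w : ℂ => Ring.inverse (η - w • (1 : C(X, ℂ)))) c := by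
    intro η c h
    have hu : IsUnit (η - c • (1 : C(X, ℂ))) := by
      rw [ContinuousMap.isUnit_iff_forall_ne_zero]
      intro y; simpa [sub_eq_zero] using h y
    obtain ⟨u, hu⟩ := hu
    have h1 := analyticAt_inverse (𝕜 := ℂ) u
    rw [hu] at h1
    have h2 : AnalyticAt ℂ (fun w : ℂ => η - w • (1 : C(X, ℂ))) c := by fun_prop
    exact AnalyticAt.fun_comp (f := fun w : ℂ => η - w • (1 : C(X, ℂ))) h1 h2
  have ev1 : ∀ (η : C(X, ℂ)) (c : ℂ), (∀ x, η x ≠ c) → ∀ᶠ w in 𝓝 c, ∀ x, η x ≠ w := by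
    intro η c h
    have hc : IsClosed (range η) := (isCompact_range η.continuous).isClosed
    have : (range η)ᶜ ∈ 𝓝 c := hc.isOpen_compl.mem_nhds (by rintro ⟨x, hx⟩; exact h x hx)
    filter_upwards [this] with w hw x hx
    exact hw ⟨x, hx⟩
  have hA : AnalyticAt ℂ (fun p : ℂ × ℂ => L (Ring.inverse (ζ - p.1 • (1 : C(X, ℂ))) *
      Ring.inverse (σ - p.2 • (1 : C(X, ℂ))) * g)) (w0, s0) := by
    have h1 : AnalyticAt ℂ (fun p : ℂ × ℂ => Ring.inverse (ζ - p.1 • (1 : C(X, ℂ)))) (w0, s0) :=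
      AnalyticAt.fun_comp (f := Prod.fst) (x := ((w0, s0) : ℂ × ℂ)) (an1 ζ w0 hζ) analyticAt_fst
    have h2 : AnalyticAt ℂ (fun p : ℂ × ℂ => Ring.inverse (σ - p.2 • (1 : C(X, ℂ)))) (w0, s0) :=
      AnalyticAt.fun_comp (f := Prod.snd) (x := ((w0, s0) : ℂ × ℂ)) (an1 σ s0 hσ) analyticAt_snd
    exact (L.analyticAt _).fun_comp ((h1.mul h2).mul analyticAt_const)
  refine hA.congr ?_
  have e1 : ∀ᶠ p : ℂ × ℂ in 𝓝 (w0, s0), ∀ x, ζ x ≠ p.1 :=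
    (continuous_fst.tendsto (w0, s0)).eventually (ev1 ζ w0 hζ)
  have e2 : ∀ᶠ p : ℂ × ℂ in 𝓝 (w0, s0), ∀ x, σ x ≠ p.2 :=
    (continuous_snd.tendsto (w0, s0)).eventually (ev1 σ s0 hσ)
  filter_upwards [e1, e2] with p h1 h2
  change ∫ x, _ ∂μ = _
  congr 1
  ext x
  simp [inv1 ζ p.1 h1 x, inv1 σ p.2 h2 x]

theorem osgood {f : ℂ × ℂ → ℂ} {U : Set (ℂ × ℂ)} (hU : IsOpen U) (hc : ContinuousOn f U)
    (h1 : ∀ p ∈ U, DifferentiableAt ℂ (fun w => f (w, p.2)) p.1)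
    (h2 : ∀ p ∈ U, DifferentiableAt ℂ (fun s => f (p.1, s)) p.2) :
    AnalyticOnNhd ℂ f U := by
  rintro ⟨w0, s0⟩ hp
  obtain ⟨r, hr, hrU⟩ : ∃ r > 0, Metric.closedBall w0 r ×ˢ Metric.closedBall s0 r ⊆ U := by
    obtain ⟨r, hr, h⟩ := Metric.nhds_basis_closedBall.mem_iff.1 (hU.mem_nhds hp)
    exact ⟨r, hr, by rwa [closedBall_prod_same]⟩
  set K : Set (ℝ × ℝ) := Icc 0 (2 * Real.pi) ×ˢ Icc 0 (2 * Real.pi) with hK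
  have hKc : IsCompact K := isCompact_Icc.prod isCompact_Icc
  have : CompactSpace K := isCompact_iff_compactSpace.1 hKc
  have hmem : ∀ θ : ℝ × ℝ, (circleMap w0 r θ.1, circleMap s0 r θ.2) ∈ U := fun θ =>
    hrU ⟨circleMap_mem_closedBall _ hr.le _, circleMap_mem_closedBall _ hr.le _⟩
  have hfc : Continuous fun θ : ℝ × ℝ => f (circleMap w0 r θ.1, circleMap s0 r θ.2) :=
    hc.comp_continuous (by fun_prop) hmem
  let c : ℂ := (2 * Real.pi * I)⁻¹
  let gfun : ℝ × ℝ → ℂ := fun θ => (c * deriv (circleMap w0 r) θ.1) *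
    (c * deriv (circleMap s0 r) θ.2) * f (circleMap w0 r θ.1, circleMap s0 r θ.2)
  have hg : Continuous gfun := by
    have a1 : Continuous fun θ : ℝ × ℝ => deriv (circleMap w0 r) θ.1 := by
      simp only [deriv_circleMap]; fun_prop
    have a2 : Continuous fun θ : ℝ × ℝ => deriv (circleMap s0 r) θ.2 := by
      simp only [deriv_circleMap]; fun_prop
    exact ((continuous_const.mul a1).mul (continuous_const.mul a2)).mul hfc
  have : IsFiniteMeasure (Measure.comap (Subtype.val : K → ℝ × ℝ) volume) := by
    constructor
    rw [Measure.comap_apply _ Subtype.val_injective (fun s hs => hKc.measurableSet.subtype_image hs) _ MeasurableSet.univ]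
    simpa using hKc.measure_lt_top
  have key := kernel_analytic (X := K) (Measure.comap (Subtype.val : K → ℝ × ℝ) volume)
    ⟨fun x => gfun x.1, hg.comp continuous_subtype_val⟩
    ⟨fun x => circleMap w0 r x.1.1, by fun_prop⟩
    ⟨fun x => circleMap s0 r x.1.2, by fun_prop⟩ w0 s0
    (fun x => circleMap_ne_center hr.ne') (fun x => circleMap_ne_center hr.ne')
  refine key.congr ?_
  have hb : Metric.ball w0 r ×ˢ Metric.ball s0 r ∈ 𝓝 (w0, s0) :=
    prod_mem_nhds (Metric.ball_mem_nhds _ hr) (Metric.ball_mem_nhds _ hr)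
  filter_upwards [hb]
  rintro ⟨w, s⟩ ⟨hw, hs⟩
  simp only at hw hs
  have hbsub : Metric.ball w0 r ⊆ Metric.closedBall w0 r := Metric.ball_subset_closedBall
  -- Cauchy formula, twice
  have hcauchy1 : ∀ s ∈ Metric.closedBall s0 r,
      f (w, s) = c • ∮ ζ in C(w0, r), (ζ - w)⁻¹ • f (ζ, s) := by
    intro s hs
    have hd : DifferentiableOn ℂ (fun ζ => f (ζ, s)) (Metric.closedBall w0 r) := fun ζ hζ =>
      (h1 (ζ, s) (hrU ⟨hζ, hs⟩)).differentiableWithinAt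
    have h := hd.circleIntegral_sub_inv_smul hw
    rw [h, smul_smul, inv_mul_cancel₀ two_pi_I_ne_zero, one_smul]
  have hcauchy2 : f (w, s) = c • ∮ σ in C(s0, r), (σ - s)⁻¹ • f (w, σ) := by
    have hd : DifferentiableOn ℂ (fun σ => f (w, σ)) (Metric.closedBall s0 r) := fun σ hσ =>
      (h2 (w, σ) (hrU ⟨hbsub hw, hσ⟩)).differentiableWithinAt
    have h := hd.circleIntegral_sub_inv_smul hs
    rw [h, smul_smul, inv_mul_cancel₀ two_pi_I_ne_zero, one_smul]
  have hne1 : ∀ θ, circleMap w0 r θ - w ≠ 0 := fun θ => sub_ne_zero.2 (circleMap_ne_mem_ball hw θ)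
  have hne2 : ∀ θ, circleMap s0 r θ - s ≠ 0 := fun θ => sub_ne_zero.2 (circleMap_ne_mem_ball hs θ)
  let h : ℝ × ℝ → ℂ := fun θ => (circleMap w0 r θ.1 - w)⁻¹ * (circleMap s0 r θ.2 - s)⁻¹ * gfun θ
  have hh : Continuous h := by
    have a1 : Continuous fun θ : ℝ × ℝ => (circleMap w0 r θ.1 - w)⁻¹ :=
      Continuous.inv₀ (by fun_prop) fun θ => hne1 _
    have a2 : Continuous fun θ : ℝ × ℝ => (circleMap s0 r θ.2 - s)⁻¹ :=
      Continuous.inv₀ (by fun_prop) fun θ => hne2 _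
    fun_prop
  change ∫ x : K, h x ∂_ = f (w, s)
  rw [integral_subtype_comap hKc.measurableSet h, hK, Measure.volume_eq_prod]
  have hIntg : IntegrableOn h (Icc 0 (2 * Real.pi) ×ˢ Icc 0 (2 * Real.pi))
      ((volume : Measure ℝ).prod volume) := by
    rw [← Measure.volume_eq_prod]
    exact hh.continuousOn.integrableOn_compact hKc
  rw [← Measure.prod_restrict, integral_prod_symm _ (by rwa [Measure.prod_restrict]), hcauchy2]
  rw [circleIntegral, intervalIntegral.integral_of_le Real.two_pi_pos.le, ← integral_Icc_eq_integral_Ioc,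
    smul_eq_mul, ← integral_const_mul]
  congr 1
  ext θ
  rw [hcauchy1 _ (circleMap_mem_closedBall _ hr.le _)]
  rw [circleIntegral, intervalIntegral.integral_of_le Real.two_pi_pos.le, ← integral_Icc_eq_integral_Ioc]
  simp only [smul_eq_mul]
  simp only [← integral_const_mul]
  congr 1
  ext φ
  simp only [h, gfun]
  ring

theorem tsum_analytic {f : ℕ → ℂ × ℂ → ℂ} {U : Set (ℂ × ℂ)} (hU : IsOpen U)
    (hf : ∀ n, AnalyticOnNhd ℂ (f n) U)
    (hb : ∀ x ∈ U, ∃ V, IsOpen V ∧ x ∈ V ∧ ∃ u : ℕ → ℝ, Summable u ∧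
      ∀ᶠ n in atTop, ∀ y ∈ V, ‖f n y‖ ≤ u n) :
    AnalyticOnNhd ℂ (fun x => ∑' n, f n x) U := by
  intro x hx
  obtain ⟨V, hV, hxV, u, hu, hfu⟩ := hb x hx
  have hW : IsOpen (V ∩ U) := hV.inter hU
  have ht : TendstoUniformlyOn (fun N x => ∑ n ∈ Finset.range N, f n x)
       (fun x => ∑' n, f n x) atTop (V ∩ U) :=
    (tendstoUniformlyOn_tsum_nat_eventually hu hfu).mono inter_subset_left
  have ha : ∀ N, AnalyticOnNhd ℂ (fun x => ∑ n ∈ Finset.range N, f n x) (V ∩ U) := by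
    intro N y hy
    exact Finset.analyticAt_fun_sum _ fun n _ => hf n y hy.2
  refine osgood hW (ht.continuousOn (Frequently.of_forall fun N => (ha N).continuousOn)) ?_ ?_
    x ⟨hxV, hx⟩
  · intro p hp
    have hc : Continuous fun w : ℂ => (w, p.2) := by fun_prop
    have h1 := (ht.tendstoLocallyUniformlyOn.comp (t := (fun w : ℂ => (w, p.2)) ⁻¹' (V ∩ U))
      (fun w => (w, p.2)) (fun w hw => hw) hc.continuousOn)
    have h2 := h1.differentiableOn (Eventually.of_forall fun N => ?_) (hW.preimage hc)
    · exact h2.differentiableAt ((hW.preimage hc).mem_nhds hp)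
    · intro w hw
      have := ((ha N) (w, p.2) hw).differentiableAt
      exact (DifferentiableAt.comp w this (by fun_prop)).differentiableWithinAt
  · intro p hp
    have hc : Continuous fun w : ℂ => (p.1, w) := by fun_prop
    have h1 := (ht.tendstoLocallyUniformlyOn.comp (t := (fun w : ℂ => (p.1, w)) ⁻¹' (V ∩ U))
      (fun w => (p.1, w)) (fun w hw => hw) hc.continuousOn)
    have h2 := h1.differentiableOn (Eventually.of_forall fun N => ?_) (hW.preimage hc)
    · exact h2.differentiableAt ((hW.preimage hc).mem_nhds hp)
    · intro w hw
      have := ((ha N) (p.1, w) hw).differentiableAt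
      exact (DifferentiableAt.comp w this (by fun_prop)).differentiableWithinAt

theorem slit_add {w : ℂ} (hw : w ∈ slitPlane) {t : ℝ} (ht : 0 ≤ t) : w + t ∈ slitPlane := by
  rw [mem_slitPlane_iff] at *
  rcases hw with h | h
  · left; simp; linarith
  · right; simpa using h

theorem slit_add_nat {w : ℂ} (hw : w ∈ slitPlane) (n : ℕ) : w + n ∈ slitPlane := by
  simpa using slit_add hw (t := n) (by positivity)

theorem integral_analytic {p : ℝ → ℂ} (hp : Continuous p) {H : ℂ × ℂ → ℂ} {b : ℝ}
    (hH : AnalyticOnNhd ℂ H (slitPlane ×ˢ {s : ℂ | b + 1 < s.re})) :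
    AnalyticOnNhd ℂ (fun x : ℂ × ℂ => ∫ t in (0:ℝ)..1, p t * H (x.1 + t, x.2 + 1))
      (slitPlane ×ˢ {s : ℂ | b < s.re}) := by
  have hU : IsOpen (slitPlane ×ˢ {s : ℂ | b < s.re}) :=
    isOpen_slitPlane.prod (isOpen_lt continuous_const continuous_re)
  have hU' : IsOpen (slitPlane ×ˢ {s : ℂ | b + 1 < s.re}) :=
    isOpen_slitPlane.prod (isOpen_lt continuous_const continuous_re)
  have hmem : ∀ x ∈ slitPlane ×ˢ {s : ℂ | b < s.re}, ∀ t : ℝ, 0 ≤ t →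
      (x.1 + t, x.2 + 1) ∈ slitPlane ×ˢ {s : ℂ | b + 1 < s.re} := by
    rintro ⟨w, s⟩ ⟨h1, h2⟩ t ht
    refine ⟨slit_add h1 ht, ?_⟩
    simpa using h2
  have hdiff : ∀ x ∈ slitPlane ×ˢ {s : ℂ | b < s.re}, DifferentiableAt ℂ
      (fun x : ℂ × ℂ => ∫ t in (0:ℝ)..1, p t * H (x.1 + t, x.2 + 1)) x := by
    intro x hx
    obtain ⟨r, hr, hrU⟩ := Metric.nhds_basis_closedBall.mem_iff.1 (hU.mem_nhds hx)
    have hcomp : IsCompact (Metric.closedBall x r ×ˢ Icc (0:ℝ) 1) :=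
      (isCompact_closedBall x r).prod isCompact_Icc
    have hmaps : MapsTo (fun y : (ℂ × ℂ) × ℝ => ((y.1.1 + y.2, y.1.2 + 1) : ℂ × ℂ))
        (Metric.closedBall x r ×ˢ Icc (0:ℝ) 1) (slitPlane ×ˢ {s : ℂ | b + 1 < s.re}) := by
      rintro ⟨y, t⟩ ⟨hy, ht⟩
      exact hmem y (hrU hy) t ht.1
    have hfd : ContinuousOn (fun y : (ℂ × ℂ) × ℝ => p y.2 • fderiv ℂ H (y.1.1 + y.2, y.1.2 + 1))
        (Metric.closedBall x r ×ˢ Icc (0:ℝ) 1) := by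
      refine ContinuousOn.smul (hp.comp continuous_snd).continuousOn ?_
      exact hH.fderiv.continuousOn.comp (f := fun y : (ℂ × ℂ) × ℝ => ((y.1.1 + y.2, y.1.2 + 1) : ℂ × ℂ))
        (Continuous.continuousOn (by fun_prop)) hmaps
    have hFc : ContinuousOn (fun y : (ℂ × ℂ) × ℝ => p y.2 * H (y.1.1 + y.2, y.1.2 + 1))
        (Metric.closedBall x r ×ˢ Icc (0:ℝ) 1) := by
      refine ContinuousOn.mul (by fun_prop) ?_
      exact hH.continuousOn.comp (f := fun y : (ℂ × ℂ) × ℝ => ((y.1.1 + y.2, y.1.2 + 1) : ℂ × ℂ))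
        (Continuous.continuousOn (by fun_prop)) hmaps
    obtain ⟨C, hC⟩ := hcomp.exists_bound_of_continuousOn hfd
    have hsec : ∀ y ∈ Metric.closedBall x r, ContinuousOn
        (fun t : ℝ => p t * H (y.1 + t, y.2 + 1)) (uIcc 0 1) := by
      intro y hy
      rw [uIcc_of_le zero_le_one]
      exact hFc.comp (f := fun t : ℝ => (y, t)) (by fun_prop : Continuous fun t : ℝ => (y, t)).continuousOn fun t ht => ⟨hy, ht⟩
    have hsec' : ContinuousOn
        (fun t : ℝ => p t • fderiv ℂ H (x.1 + t, x.2 + 1)) (uIcc 0 1) := by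
      rw [uIcc_of_le zero_le_one]
      exact hfd.comp (f := fun t : ℝ => (x, t)) (by fun_prop : Continuous fun t : ℝ => (x, t)).continuousOn
        fun t ht => ⟨Metric.mem_closedBall_self hr.le, ht⟩
    have h := intervalIntegral.hasFDerivAt_integral_of_dominated_of_fderiv_le (𝕜 := ℂ)
      (μ := volume) (a := 0) (b := 1) (bound := fun _ => C) (x₀ := x)
      (F := fun (x : ℂ × ℂ) (t : ℝ) => p t * H (x.1 + t, x.2 + 1))
      (F' := fun (x : ℂ × ℂ) (t : ℝ) => p t • fderiv ℂ H (x.1 + t, x.2 + 1))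
      (s := Metric.closedBall x r) (Metric.closedBall_mem_nhds x hr) ?_ ?_ ?_ ?_ ?_ ?_
    · exact h.differentiableAt
    · filter_upwards [Metric.closedBall_mem_nhds x hr] with y hy
      exact (hsec y hy).intervalIntegrable.def'.aestronglyMeasurable
    · exact (hsec x (Metric.mem_closedBall_self hr.le)).intervalIntegrable
    · exact hsec'.intervalIntegrable.def'.aestronglyMeasurable
    · refine Eventually.of_forall fun t ht y hy => ?_
      rw [uIoc_of_le zero_le_one] at ht
      exact hC (y, t) ⟨hy, Ioc_subset_Icc_self ht⟩
    · exact intervalIntegrable_const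
    · refine Eventually.of_forall fun t ht y hy => ?_
      rw [uIoc_of_le zero_le_one] at ht
      have h1 := (hH _ (hmem y (hrU hy) t ht.1.le)).differentiableAt.hasFDerivAt
      have h2 : HasFDerivAt (fun y : ℂ × ℂ => ((y.1 + t, y.2 + 1) : ℂ × ℂ))
          (ContinuousLinearMap.id ℂ (ℂ × ℂ)) y := by
        have := (hasFDerivAt_id (𝕜 := ℂ) y).add_const ((t, 1) : ℂ × ℂ)
        exact this
      have h3 := (h1.comp y h2).const_mul (p t)
      simpa using h3
  refine osgood hU (fun x hx => (hdiff x hx).continuousAt.continuousWithinAt) ?_ ?_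
  · intro x hx
    exact DifferentiableAt.comp (g := fun x : ℂ × ℂ => ∫ t in (0:ℝ)..1, p t * H (x.1 + t, x.2 + 1))
      x.1 (hdiff x hx) (f := fun w => (w, x.2)) (by fun_prop)
  · intro x hx
    exact DifferentiableAt.comp (g := fun x : ℂ × ℂ => ∫ t in (0:ℝ)..1, p t * H (x.1 + t, x.2 + 1))
      x.2 (hdiff x hx) (f := fun w => (x.1, w)) (by fun_prop)

/-- the recursion operator -/
noncomputable def recT (A : ℂ × ℂ → ℂ) (p : ℝ → ℂ) (H : ℂ × ℂ → ℂ) : ℂ × ℂ → ℂ := fun x =>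
  A x + (x.2 - 1) * ∫ t in (0:ℝ)..1, p t * H (x.1 + t, x.2 + 1)

theorem continuation {A G0 : ℂ × ℂ → ℂ} {p : ℝ → ℂ} (hp : Continuous p)
    (hA : AnalyticOnNhd ℂ A (slitPlane ×ˢ univ))
    (hG0 : AnalyticOnNhd ℂ G0 (slitPlane ×ˢ {s : ℂ | 1 < s.re}))
    (hfe : ∀ w ∈ slitPlane, ∀ s : ℂ, 1 < s.re → G0 (w, s) = recT A p G0 (w, s)) :
    ∃ G : ℂ × ℂ → ℂ, AnalyticOnNhd ℂ G (slitPlane ×ˢ univ) ∧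
      (∀ w ∈ slitPlane, ∀ s : ℂ, 1 < s.re → G (w, s) = G0 (w, s)) ∧
      ∀ w ∈ slitPlane, G (w, 1) = A (w, 1) := by
  let g : ℕ → ℂ × ℂ → ℂ := fun n => (recT A p)^[n] G0
  have gs : ∀ n, g (n+1) = recT A p (g n) := fun n => Function.iterate_succ_apply' _ _ _
  have han : ∀ n : ℕ, AnalyticOnNhd ℂ (g n) (slitPlane ×ˢ {s : ℂ | 1 - (n:ℝ) < s.re}) := by
    intro n
    induction n with
    | zero => simpa [g] using hG0
    | succ n ih =>
      rw [gs]
      have h := integral_analytic hp (b := 1 - ((n + 1 : ℕ) : ℝ)) (H := g n) (by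
        convert ih using 5
        push_cast; ring)
      intro x hx
      have h1 := hA x ⟨hx.1, mem_univ _⟩
      have h2 := h x hx
      have h3 : AnalyticAt ℂ (fun x : ℂ × ℂ => x.2 - 1) x := analyticAt_snd.sub analyticAt_const
      exact h1.add (h3.mul h2)
  have hst : ∀ n : ℕ, ∀ w ∈ slitPlane, ∀ s : ℂ, 1 - (n:ℝ) < s.re → g (n+1) (w, s) = g n (w, s) := by
    intro n
    induction n with
    | zero =>
      intro w hw s hs
      exact (hfe w hw s (by simpa using hs)).symm
    | succ n ih =>
      intro w hw s hs
      rw [gs (n+1), gs n]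
      change _ + _ * _ = _ + _ * _
      congr 2
      refine intervalIntegral.integral_congr fun t ht => ?_
      rw [uIcc_of_le zero_le_one] at ht
      rw [← gs n, ih _ (slit_add hw ht.1) _ (by push_cast at hs; simp; linarith)]
  have hst' : ∀ n m : ℕ, n ≤ m → ∀ w ∈ slitPlane, ∀ s : ℂ, 1 - (n:ℝ) < s.re →
      g m (w, s) = g n (w, s) := by
    intro n m hnm w hw s hs
    induction m, hnm using Nat.le_induction with
    | base => rfl
    | succ m hm ih =>
      rw [hst m w hw s ?_, ih]
      have : (n:ℝ) ≤ m := by exact_mod_cast hm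
      linarith
  let N : ℂ → ℕ := fun s => ⌊|s.re - 1|⌋₊ + 1
  have hN : ∀ s, 1 - (N s : ℝ) < s.re := by
    intro s
    have := Nat.lt_floor_add_one |s.re - 1|
    have h2 := neg_abs_le (s.re - 1)
    simp only [N]; push_cast; linarith
  have hG : ∀ n : ℕ, ∀ w ∈ slitPlane, ∀ s : ℂ, 1 - (n:ℝ) < s.re → g (N s) (w, s) = g n (w, s) := by
    intro n w hw s hs
    rcases le_total n (N s) with h | h
    · exact hst' _ _ h w hw s hs
    · exact (hst' _ _ h w hw s (hN s)).symm
  refine ⟨fun x => g (N x.2) x, ?_, ?_, ?_⟩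
  · rintro ⟨w, s⟩ ⟨hw, -⟩
    refine (han (N s) (w, s) ⟨hw, hN s⟩).congr ?_
    have hU : IsOpen (slitPlane ×ˢ {s' : ℂ | 1 - (N s:ℝ) < s'.re}) :=
      isOpen_slitPlane.prod (isOpen_lt continuous_const continuous_re)
    filter_upwards [hU.mem_nhds (x := (w, s)) ⟨hw, hN s⟩]
    rintro ⟨w', s'⟩ ⟨h1, h2⟩
    exact (hG _ w' h1 s' h2).symm
  · intro w hw s hs
    simpa [g] using hG 0 w hw s (by simpa using hs)
  · intro w hw
    have := hG 1 w hw 1 (by simp)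
    simp only at this ⊢
    rw [this, gs 0]
    simp [recT]

theorem cpow_bound {R B σ : ℝ} (hR : 0 ≤ R) (hσ : 0 < σ) {w s : ℂ} {n : ℕ} (hw : ‖w‖ ≤ R)
    (hs : |s.im| ≤ B) (hs' : σ ≤ s.re) (hn : 2 * R + 2 ≤ n) :
    ‖(w + n) ^ (-s)‖ ≤ ((n:ℝ) / 2) ^ (-σ) * Real.exp (Real.pi * B) := by
  have h1 : (n:ℝ) / 2 ≤ ‖w + n‖ := by
    have := norm_sub_le (w + n) w
    simp at this
    linarith
  have h2 : (1:ℝ) ≤ n / 2 := by linarith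
  refine (norm_cpow_le _ _).trans ?_
  rw [div_eq_mul_inv, ← Real.exp_neg]
  gcongr ?_ * Real.exp ?_
  · simp only [neg_re]
    calc ‖w + n‖ ^ (-s.re) ≤ ((n:ℝ) / 2) ^ (-s.re) :=
          Real.rpow_le_rpow_of_nonpos (by linarith) h1 (by linarith)
      _ ≤ ((n:ℝ) / 2) ^ (-σ) := Real.rpow_le_rpow_of_exponent_le h2 (by linarith)
  · simp only [neg_im, mul_neg, neg_neg]
    calc (w + n).arg * s.im ≤ |(w + n).arg * s.im| := le_abs_self _
      _ = |(w + n).arg| * |s.im| := abs_mul _ _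
      _ ≤ Real.pi * B := mul_le_mul (abs_arg_le_pi _) hs (abs_nonneg _) Real.pi_pos.le

theorem bound_summable {σ : ℝ} (hσ : 1 < σ) (C : ℝ) :
    Summable fun n : ℕ => ((n:ℝ) / 2) ^ (-σ) * C := by
  refine Summable.mul_right C ?_
  have : ∀ n : ℕ, ((n:ℝ) / 2) ^ (-σ) = (n:ℝ) ^ (-σ) * ((2:ℝ) ^ (-σ))⁻¹ := fun n => by
    rw [Real.div_rpow (by positivity) (by positivity), div_eq_mul_inv]
  simp only [this]
  exact (Real.summable_nat_rpow.2 (by linarith)).mul_right _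

theorem pow_bound {l : ℂ} (hl : ‖l‖ ≤ 1) (n : ℕ) (x : ℂ) : ‖l ^ n * x‖ ≤ ‖x‖ := by
  rw [norm_mul, norm_pow]
  exact mul_le_of_le_one_left (norm_nonneg _) (pow_le_one₀ (norm_nonneg _) hl)

/-- the basic series -/
noncomputable def lerch (l : ℂ) (x : ℂ × ℂ) : ℂ := ∑' n : ℕ, l ^ n * (x.1 + n) ^ (-x.2)

theorem lerch_summable {l : ℂ} (hl : ‖l‖ ≤ 1) (w s : ℂ) (hs : 1 < s.re) :
    Summable fun n : ℕ => ‖l ^ n * (w + n) ^ (-s)‖ := by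
  refine Summable.of_norm_bounded_eventually_nat
    (bound_summable hs (Real.exp (Real.pi * |s.im|))) ?_
  filter_upwards [eventually_ge_atTop ⌈2 * ‖w‖ + 2⌉₊] with n hn
  rw [norm_norm]
  exact (pow_bound hl n _).trans (cpow_bound (norm_nonneg w) (by linarith) le_rfl le_rfl le_rfl
    (Nat.ceil_le.1 hn))

theorem lerch_analytic {l : ℂ} (hl : ‖l‖ ≤ 1) :
    AnalyticOnNhd ℂ (lerch l) (slitPlane ×ˢ {s : ℂ | 1 < s.re}) := by
  refine tsum_analytic (isOpen_slitPlane.prod (isOpen_lt continuous_const continuous_re)) ?_ ?_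
  · rintro n ⟨w, s⟩ ⟨hw, hs⟩
    refine analyticAt_const.mul (AnalyticAt.cpow (analyticAt_fst.add analyticAt_const)
      analyticAt_snd.neg (slit_add_nat hw n))
  · rintro ⟨w, s⟩ ⟨hw, hs⟩
    simp only [mem_ofPred_eq] at hs
    refine ⟨Metric.ball 0 (‖w‖ + 1) ×ˢ (Metric.ball 0 (‖s‖ + 1) ∩ {s' : ℂ | (1 + s.re) / 2 < s'.re}),
      Metric.isOpen_ball.prod (Metric.isOpen_ball.inter (isOpen_lt continuous_const continuous_re)),
      ⟨by simp, by simp, ?_⟩,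
      fun n => ((n:ℝ) / 2) ^ (-((1 + s.re) / 2)) * Real.exp (Real.pi * (‖s‖ + 1)),
      bound_summable (by linarith) _, ?_⟩
    · simp only [mem_ofPred_eq]; linarith
    · filter_upwards [eventually_ge_atTop ⌈2 * (‖w‖ + 1) + 2⌉₊] with n hn
      rintro ⟨w', s'⟩ ⟨h1, h2, h3⟩
      simp only [mem_ball_zero_iff] at h1 h2
      exact (pow_bound hl n _).trans (cpow_bound (by positivity) (by linarith) h1.le
        ((abs_im_le_norm _).trans h2.le) (le_of_lt h3) (Nat.ceil_le.1 hn))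

theorem term_cont {w : ℂ} (hw : w ∈ slitPlane) (s : ℂ) (n : ℕ) :
    ContinuousOn (fun t : ℝ => (w + t + n) ^ (-s)) (Icc 0 1) := by
  refine ContinuousOn.cpow (by fun_prop) continuousOn_const fun t ht => ?_
  exact slit_add_nat (slit_add hw ht.1) n

theorem lerch_integral {l : ℂ} (hl : ‖l‖ ≤ 1) {p : ℝ → ℂ} (hp : Continuous p) {w s : ℂ}
    (hw : w ∈ slitPlane) (hs : 1 < s.re) :
    HasSum (fun n : ℕ => l ^ n * ∫ t in (0:ℝ)..1, p t * (w + t + n) ^ (-s))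
      (∫ t in (0:ℝ)..1, p t * lerch l (w + t, s)) := by
  obtain ⟨C, hC⟩ := (isCompact_Icc (a := (0:ℝ)) (b := 1)).exists_bound_of_continuousOn
    hp.continuousOn
  have hC0 : 0 ≤ C := (norm_nonneg _).trans (hC 0 (by simp))
  have hcont : ∀ n : ℕ, ContinuousOn (fun t : ℝ => l ^ n * (p t * (w + t + n) ^ (-s))) (Icc 0 1) :=
    fun n => continuousOn_const.mul (hp.continuousOn.mul (term_cont hw s n))
  have h := hasSum_integral_of_summable_integral_norm (μ := volume.restrict (Ioc (0:ℝ) 1))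
    (F := fun (n : ℕ) (t : ℝ) => l ^ n * (p t * (w + t + n) ^ (-s))) ?_ ?_
  · simp only [intervalIntegral.integral_of_le (zero_le_one (α := ℝ))]
    have e1 : ∀ t : ℝ, p t * lerch l (w + t, s) = ∑' n : ℕ, l ^ n * (p t * (w + t + n) ^ (-s)) := by
      intro t
      rw [lerch, ← tsum_mul_left]
      congr 1
      funext n
      ring
    simp only [e1]
    simp only [integral_const_mul] at h
    exact h
  · intro n
    exact ((hcont n).integrableOn_compact isCompact_Icc).mono_set Ioc_subset_Icc_self
  · refine Summable.of_norm_bounded_eventually_nat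
      (bound_summable hs (Real.exp (Real.pi * |s.im|) * C)) ?_
    filter_upwards [eventually_ge_atTop ⌈2 * (‖w‖ + 1) + 2⌉₊] with n hn
    have h1 : ∀ t ∈ Ioc (0:ℝ) 1, ‖‖l ^ n * (p t * (w + t + n) ^ (-s))‖‖ ≤
        ((n:ℝ) / 2) ^ (-s.re) * (Real.exp (Real.pi * |s.im|) * C) := by
      intro t ht
      rw [norm_norm]
      refine (pow_bound hl n _).trans ?_
      rw [norm_mul, ← mul_assoc, mul_comm]
      refine mul_le_mul ?_ (hC t (Ioc_subset_Icc_self ht)) (norm_nonneg _) (by positivity)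
      refine cpow_bound (by positivity) (by linarith) ?_ le_rfl le_rfl (Nat.ceil_le.1 hn)
      refine (norm_add_le _ _).trans ?_
      rw [norm_real, Real.norm_of_nonneg ht.1.le]
      linarith [ht.2]
    have h2 := norm_setIntegral_le_of_norm_le_const (μ := volume) (s := Ioc (0:ℝ) 1) (by simp) h1
    simpa using h2

theorem tendsto_cpow_zero {w s : ℂ} (hs : 0 < s.re) :
    Tendsto (fun n : ℕ => (w + n) ^ (-s)) atTop (𝓝 0) := by
  have h : Tendsto (fun n : ℕ => ((n:ℝ) / 2) ^ (-s.re) * Real.exp (Real.pi * |s.im|)) atTop (𝓝 0) := by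
    have h1 : Tendsto (fun n : ℕ => (n:ℝ) / 2) atTop atTop :=
      tendsto_natCast_atTop_atTop.atTop_div_const (by norm_num)
    simpa using ((tendsto_rpow_neg_atTop hs).comp h1).mul_const (Real.exp (Real.pi * |s.im|))
  refine squeeze_zero_norm' ?_ h
  filter_upwards [eventually_ge_atTop ⌈2 * ‖w‖ + 2⌉₊] with n hn
  exact cpow_bound (norm_nonneg w) hs le_rfl le_rfl le_rfl (Nat.ceil_le.1 hn)

theorem hasDeriv_cpow {w : ℂ} (hw : w ∈ slitPlane) (c : ℂ) {t : ℝ} (ht : 0 ≤ t) :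
    HasDerivAt (fun t : ℝ => (w + t) ^ c) (c * (w + t) ^ (c - 1)) t := by
  have h1 : HasDerivAt (fun x : ℂ => (w + x) ^ c) (c * (w + t) ^ (c - 1) * 1) (t : ℂ) :=
    HasDerivAt.cpow_const ((hasDerivAt_id (t : ℂ)).const_add w) (slit_add hw ht)
  simpa using h1.comp_ofReal

theorem cont_cpow {w : ℂ} (hw : w ∈ slitPlane) (c : ℂ) :
    ContinuousOn (fun t : ℝ => (w + t) ^ c) (uIcc 0 1) := by
  rw [uIcc_of_le zero_le_one]
  intro t ht
  exact (hasDeriv_cpow hw c ht.1).continuousAt.continuousWithinAt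

theorem term_id_one {w : ℂ} (hw : w ∈ slitPlane) (s : ℂ) :
    s * ∫ t in (0:ℝ)..1, (w + t) ^ (-(s + 1)) = w ^ (-s) - (w + 1) ^ (-s) := by
  have h := intervalIntegral.integral_eq_sub_of_hasDerivAt (a := 0) (b := 1)
    (f := fun t : ℝ => -(w + t) ^ (-s)) (f' := fun t : ℝ => s * (w + t) ^ (-(s + 1))) ?_ ?_
  · rw [← intervalIntegral.integral_const_mul, h]
    simp; ring
  · intro t ht
    rw [uIcc_of_le zero_le_one] at ht
    have h := (hasDeriv_cpow hw (-s) ht.1).fun_neg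
    rw [show -(-s * (w + t) ^ (-s - 1)) = s * (w + t) ^ (-(s + 1)) by
      rw [show -(s + 1) = -s - 1 by ring]; ring] at h
    exact h
  · exact (continuousOn_const.mul (cont_cpow hw _)).intervalIntegrable

theorem term_id_two {w : ℂ} (hw : w ∈ slitPlane) (s : ℂ) :
    (s - 1) * w ^ (-s) = (w ^ (1 - s) - (w + 1) ^ (1 - s)) +
      (s - 1) * (s * ∫ t in (0:ℝ)..1, (1 - t) * (w + t) ^ (-(s + 1))) := by
  have h := intervalIntegral.integral_mul_deriv_eq_deriv_mul (a := 0) (b := 1)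
    (u := fun t : ℝ => (1 - t : ℂ)) (u' := fun _ => -1)
    (v := fun t : ℝ => -(w + t) ^ (-s)) (v' := fun t : ℝ => s * (w + t) ^ (-(s + 1))) ?_ ?_ ?_ ?_
  · have h' := term_id_one hw (s - 1)
    rw [show -(s - 1 + 1) = -s by ring, show -(s - 1) = 1 - s by ring] at h'
    have e : ∫ t in (0:ℝ)..1, (1 - t : ℂ) * (s * (w + t) ^ (-(s + 1))) =
        s * ∫ t in (0:ℝ)..1, (1 - t : ℂ) * (w + t) ^ (-(s + 1)) := by
      rw [← intervalIntegral.integral_const_mul]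
      congr 1; ext t; ring
    rw [← e, h, ← h']
    simp
    ring
  · intro t ht
    simpa using ((hasDerivAt_id (t : ℂ)).const_sub 1).comp_ofReal
  · intro t ht
    rw [uIcc_of_le zero_le_one] at ht
    have h := (hasDeriv_cpow hw (-s) ht.1).fun_neg
    rw [show -(-s * (w + t) ^ (-s - 1)) = s * (w + t) ^ (-(s + 1)) by
      rw [show -(s + 1) = -s - 1 by ring]; ring] at h
    exact h
  · exact intervalIntegrable_const
  · exact (continuousOn_const.mul (cont_cpow hw _)).intervalIntegrable

theorem hasSum_telescope {f : ℕ → ℂ} (hs : Summable fun n => f n - f (n + 1))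
    (h0 : Tendsto f atTop (𝓝 0)) : HasSum (fun n => f n - f (n + 1)) (f 0) := by
  have h1 := hs.hasSum.tendsto_sum_nat
  simp only [Finset.sum_range_sub'] at h1
  have h2 : Tendsto (fun n => f 0 - f n) atTop (𝓝 (f 0)) := by
    simpa using h0.const_sub (f 0)
  rw [← tendsto_nhds_unique h1 h2]
  exact hs.hasSum

theorem fe_one {w s : ℂ} (hw : w ∈ slitPlane) (hs : 1 < s.re) :
    (s - 1) * lerch 1 (w, s) = w ^ (1 - s) +
      (s - 1) * ∫ t in (0:ℝ)..1, (1 - t : ℂ) * (s * lerch 1 (w + t, s + 1)) := by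
  have hI := (lerch_integral (l := 1) (by simp) (p := fun t => (1 - t : ℂ)) (by fun_prop) hw
    (s := s + 1) (by simp; linarith)).mul_left ((s - 1) * s)
  have hF : HasSum (fun n : ℕ => (s - 1) * (1 ^ n * (w + n) ^ (-s))) ((s - 1) * lerch 1 (w, s)) :=
    (lerch_summable (l := 1) (by simp) w s hs).of_norm.hasSum.mul_left _
  have hD := hF.sub hI
  have e : ∀ n : ℕ, (s - 1) * ((1:ℂ) ^ n * (w + n) ^ (-s)) - (s - 1) * s *
      (1 ^ n * ∫ t in (0:ℝ)..1, (1 - t : ℂ) * (w + t + n) ^ (-(s + 1))) =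
      (w + n) ^ (1 - s) - (w + (n + 1 : ℕ)) ^ (1 - s) := by
    intro n
    have := term_id_two (slit_add_nat hw n) s
    simp only [one_pow, one_mul, this]
    have e2 : ∀ t : ℝ, w + t + n = w + n + t := fun t => by ring
    simp only [e2]
    push_cast
    rw [show w + n + 1 = w + (n + 1) by ring]
    ring
  simp only [e] at hD
  have hT := hasSum_telescope (f := fun n : ℕ => (w + n) ^ (1 - s)) hD.summable (by
    have := tendsto_cpow_zero (w := w) (s := s - 1) (by simpa using hs)
    simpa using this)
  have := hD.unique hT
  simp only [Nat.cast_zero, add_zero] at this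
  have e3 : ∫ t in (0:ℝ)..1, (1 - t : ℂ) * (s * lerch 1 (w + t, s + 1)) =
      s * ∫ t in (0:ℝ)..1, (1 - t : ℂ) * lerch 1 (w + t, s + 1) := by
    rw [← intervalIntegral.integral_const_mul]
    congr 1; ext t; ring
  rw [e3, ← this]
  ring

theorem fe_ne {l w s : ℂ} (hl : ‖l‖ ≤ 1) (hw : w ∈ slitPlane) (hs : 1 < s.re) :
    (1 - l) * lerch l (w, s) = w ^ (-s) - l * (s * ∫ t in (0:ℝ)..1, lerch l (w + t, s + 1)) := by
  have hI := (lerch_integral hl (p := fun _ => 1) (by fun_prop) hw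
    (s := s + 1) (by simp; linarith)).mul_left (l * s)
  simp only [one_mul] at hI
  have hsum := (lerch_summable hl w s hs).of_norm
  have hF := hsum.hasSum
  have hF1 := (hasSum_nat_add_iff' 1).2 hF
  have hD := (hF.mul_left l).sub hI
  have e : ∀ n : ℕ, l * (l ^ n * (w + n) ^ (-s)) - l * s *
      (l ^ n * ∫ t in (0:ℝ)..1, (w + t + n) ^ (-(s + 1))) =
      l ^ (n + 1) * (w + (n + 1 : ℕ)) ^ (-s) := by
    intro n
    have := term_id_one (slit_add_nat hw n) s
    have e2 : ∀ t : ℝ, w + t + n = w + n + t := fun t => by ring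
    simp only [e2]
    push_cast
    rw [show w + (n + 1 : ℂ) = w + n + 1 by ring]
    linear_combination (- l * l ^ n) * this
  simp only [e] at hD
  have := hD.unique hF1
  simp only [Finset.range_one, Finset.sum_singleton, pow_zero, Nat.cast_zero, add_zero, one_mul] at this
  change l * lerch l (w, s) - _ = lerch l (w, s) - _ at this
  linear_combination - this

open Classical in
theorem lerch_continuation {l : ℂ} (hl : ‖l‖ ≤ 1) :
    ∃ G : ℂ × ℂ → ℂ, AnalyticOnNhd ℂ G (slitPlane ×ˢ univ) ∧
      (∀ w ∈ slitPlane, ∀ s : ℂ, 1 < s.re → G (w, s) = (s - 1) * lerch l (w, s)) ∧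
      ∀ w ∈ slitPlane, G (w, 1) = if l = 1 then 1 else 0 := by
  have hG0 : AnalyticOnNhd ℂ (fun x : ℂ × ℂ => (x.2 - 1) * lerch l x)
      (slitPlane ×ˢ {s : ℂ | 1 < s.re}) := fun x hx =>
    (analyticAt_snd.sub analyticAt_const).mul (lerch_analytic hl x hx)
  by_cases h : l = 1
  · subst h
    obtain ⟨G, h1, h2, h3⟩ := continuation (A := fun x => x.1 ^ (1 - x.2))
      (p := fun t => (1 - t : ℂ)) (by fun_prop)
      (fun x hx => AnalyticAt.cpow analyticAt_fst (analyticAt_const.sub analyticAt_snd) hx.1) hG0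
      (by
        intro w hw s hs
        simp only [recT, add_sub_cancel_right]
        exact fe_one hw hs)
    exact ⟨G, h1, h2, fun w hw => by simp [h3 w hw]⟩
  · have hne : 1 - l ≠ 0 := sub_ne_zero.2 (Ne.symm h)
    obtain ⟨G, h1, h2, h3⟩ := continuation (A := fun x => (x.2 - 1) * x.1 ^ (-x.2) * (1 - l)⁻¹)
      (p := fun t => -l * (1 - l)⁻¹) (by fun_prop)
      (fun x hx => ((analyticAt_snd.sub analyticAt_const).mul
        (AnalyticAt.cpow analyticAt_fst analyticAt_snd.neg hx.1)).mul analyticAt_const) hG0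
      (by
        intro w hw s hs
        simp only [recT, add_sub_cancel_right]
        have := fe_ne hl hw hs
        rw [intervalIntegral.integral_const_mul, intervalIntegral.integral_const_mul]
        field_simp
        linear_combination (s - 1) * this)
    exact ⟨G, h1, h2, fun w hw => by simp [h3 w hw, h]⟩

theorem slit_of {w : ℂ} (h : ¬ ∃ x : ℝ, x ≤ 0 ∧ w = (x : ℂ)) : w ∈ slitPlane := by
  rw [mem_slitPlane_iff]
  by_contra hc
  push Not at hc
  exact h ⟨w.re, hc.1, Complex.ext (by simp) (by simp [hc.2])⟩

theorem slit_div {w : ℂ} (h : w ∈ slitPlane) {k : ℕ} (hk : 0 < k) : w / k ∈ slitPlane := by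
  have hk' : (0:ℝ) < k := by exact_mod_cast hk
  rw [mem_slitPlane_iff] at *
  rw [div_natCast_re, div_natCast_im]
  rcases h with h | h
  · left; positivity
  · right; positivity

theorem scale_cpow {w : ℂ} (hw : w ∈ slitPlane) {k : ℕ} (hk : 0 < k) (n : ℕ) (s : ℂ) :
    (w + k * n) ^ (-s) = (k:ℂ) ^ (-s) * (w / k + n) ^ (-s) := by
  have hk' : (0:ℝ) < k := by exact_mod_cast hk
  have hk0 : (k:ℂ) ≠ 0 := by exact_mod_cast hk.ne'
  have hx : w / k + n ≠ 0 := slitPlane_ne_zero (slit_add_nat (slit_div hw hk) n)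
  have e : w + k * n = ((k : ℝ) : ℂ) * (w / k + n) := by
    push_cast; field_simp
  rw [e, cpow_def_of_ne_zero (by simp [hx, hk0]), log_ofReal_mul hk' hx, add_mul, exp_add,
    cpow_def_of_ne_zero hk0, cpow_def_of_ne_zero hx, ofReal_log hk'.le, ofReal_natCast]

theorem exp_eq_one_iff' (b : ℂ) : exp (2 * Real.pi * I * b) = 1 ↔ ∃ m : ℤ, b = m := by
  rw [exp_eq_one_iff]
  refine exists_congr fun m => ?_
  rw [mul_comm (m : ℂ)]
  exact mul_right_inj' two_pi_I_ne_zero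

theorem norm_exp_le (b : ℂ) (hb : 0 ≤ b.im) : ‖exp (2 * Real.pi * I * b)‖ ≤ 1 := by
  rw [norm_exp]
  simp
  positivity

open Classical in
/-- If some `a j` lies in `ℤ[1/k]`, then `(s−1)·ζ_k(a, z, s)` extends to a function
`G(z, s)` analytic on `Ω × ℂ` (with `Ω` the set of `z` whose bases `(j+1) + z j` avoid
the closed negative real axis), with `G(z, 1) = (1/k) ∑_{a_j ∈ ℤ[1/k]} e^{2πi j a_j}`
independent of `z`: the zeta function has a simple pole at `s = 1` with constant residue. -/
theorem zeta_k_analytic_in_z_and_s_simple_pole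
    (k : ℕ) (hk : 0 < k)
    (a : Fin k → ℂ) (haIm : ∀ j, 0 ≤ (a j).im)
    (haZ : ∃ j : Fin k, ∃ m : ℤ, (k : ℂ) * a j = (m : ℂ)) :
    ∃ G : (Fin k → ℂ) × ℂ → ℂ,
      AnalyticOnNhd ℂ G
        ({z : Fin k → ℂ | ∀ j : Fin k,
            ¬ ∃ x : ℝ, x ≤ 0 ∧ ((j : ℂ) + 1) + z j = (x : ℂ)} ×ˢ Set.univ) ∧
      (∀ z : Fin k → ℂ,
        (∀ j : Fin k, ¬ ∃ x : ℝ, x ≤ 0 ∧ ((j : ℂ) + 1) + z j = (x : ℂ)) →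
        ∀ s : ℂ, 1 < s.re →
          G (z, s) = (s - 1) * ∑' n : ℕ,
            Complex.exp (2 * Real.pi * Complex.I * ((n : ℂ) + 1) *
                a ⟨n % k, Nat.mod_lt n hk⟩) *
              (((n : ℂ) + 1) + z ⟨n % k, Nat.mod_lt n hk⟩) ^ (-s)) ∧
      ∀ z : Fin k → ℂ,
        (∀ j : Fin k, ¬ ∃ x : ℝ, x ≤ 0 ∧ ((j : ℂ) + 1) + z j = (x : ℂ)) →
        G (z, 1) = (1 / (k : ℂ)) * ∑ j : Fin k,
          if ∃ m : ℤ, (k : ℂ) * a j = (m : ℂ) then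
            Complex.exp (2 * Real.pi * Complex.I * ((j : ℂ) + 1) * a j)
          else 0 := by
  classical
  have hk0 : (k:ℂ) ≠ 0 := by exact_mod_cast hk.ne'
  have : NeZero k := ⟨hk.ne'⟩
  let l : Fin k → ℂ := fun j => exp (2 * Real.pi * I * (k * a j))
  have hl : ∀ j, ‖l j‖ ≤ 1 := fun j => norm_exp_le _ (by simpa using mul_nonneg k.cast_nonneg (haIm j))
  choose g hg1 hg2 hg3 using fun j => lerch_continuation (hl j)
  let e : Fin k → ℂ := fun j => exp (2 * Real.pi * I * ((j : ℂ) + 1) * a j)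
  have hslit : ∀ z : Fin k → ℂ,
      (∀ j : Fin k, ¬ ∃ x : ℝ, x ≤ 0 ∧ ((j : ℂ) + 1) + z j = (x : ℂ)) →
      ∀ j : Fin k, ((j : ℂ) + 1 + z j) / k ∈ slitPlane := fun z hz j => slit_div (slit_of (hz j)) hk
  refine ⟨fun x => ∑ j : Fin k, e j * (k:ℂ) ^ (-x.2) * g j (((j : ℂ) + 1 + x.1 j) / k, x.2),
    ?_, ?_, ?_⟩
  · rintro ⟨z, s⟩ ⟨hz, -⟩
    refine Finset.analyticAt_fun_sum _ fun j _ => ?_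
    have h1 : AnalyticAt ℂ (fun x : (Fin k → ℂ) × ℂ => (k:ℂ) ^ (-x.2)) (z, s) :=
      AnalyticAt.cpow analyticAt_const analyticAt_snd.neg (natCast_mem_slitPlane.2 hk.ne')
    have h2 : AnalyticAt ℂ (fun x : (Fin k → ℂ) × ℂ => x.1 j) (z, s) :=
      ((ContinuousLinearMap.proj (R := ℂ) (φ := fun _ : Fin k => ℂ) j).comp
        (ContinuousLinearMap.fst ℂ (Fin k → ℂ) ℂ)).analyticAt _
    have h3 : AnalyticAt ℂ (fun x : (Fin k → ℂ) × ℂ => ((((j : ℂ) + 1 + x.1 j) / k, x.2) : ℂ × ℂ))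
        (z, s) :=
      ((analyticAt_const.add h2).div analyticAt_const hk0).prod analyticAt_snd
    have h4 := AnalyticAt.fun_comp
      (f := fun x : (Fin k → ℂ) × ℂ => ((((j : ℂ) + 1 + x.1 j) / k, x.2) : ℂ × ℂ))
      (hg1 j _ ⟨hslit z hz j, mem_univ _⟩) h3
    exact (analyticAt_const.mul h1).mul h4
  · intro z hz s hs
    let F : Fin k × ℕ → ℂ := fun x => e x.1 * (k:ℂ) ^ (-s) *
      (l x.1 ^ x.2 * (((x.1 : ℂ) + 1 + z x.1) / k + x.2) ^ (-s))
    let E : ℕ ≃ Fin k × ℕ := (Nat.divModEquiv k).trans (Equiv.prodComm _ _)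
    have hF : Summable F := by
      refine Summable.of_norm ?_
      rw [summable_prod_of_nonneg (fun _ => norm_nonneg _)]
      refine ⟨fun j => ?_, (hasSum_fintype _).summable⟩
      simp only [F, norm_mul (e j * (k:ℂ) ^ (-s))]
      exact (lerch_summable (hl j) _ s hs).mul_left _
    have hterm : ∀ n : ℕ, Complex.exp (2 * Real.pi * Complex.I * ((n : ℂ) + 1) *
                a ⟨n % k, Nat.mod_lt n hk⟩) *
              (((n : ℂ) + 1) + z ⟨n % k, Nat.mod_lt n hk⟩) ^ (-s) = F (E n) := by
      intro n
      have hE : E n = (⟨n % k, Nat.mod_lt n hk⟩, n / k) := rfl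
      rw [hE]
      set j : Fin k := ⟨n % k, Nat.mod_lt n hk⟩ with hj
      have hn : (n : ℂ) = (j : ℂ) + k * ((n / k : ℕ) : ℂ) := by
        have := Nat.mod_add_div n k
        simp only [hj]
        exact_mod_cast this.symm
      simp only [F]
      generalize n / k = m at *
      have h1 : ((n : ℂ) + 1) + z j = ((j : ℂ) + 1 + z j) + k * m := by rw [hn]; ring
      rw [h1, scale_cpow (slit_of (hz j)) hk]
      have h2 : exp (2 * Real.pi * I * ((n : ℂ) + 1) * a j) = e j * l j ^ m := by
        simp only [e, l]
        rw [← exp_nat_mul, ← exp_add, hn]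
        congr 1
        ring
      rw [h2]
      ring
    simp only [hterm]
    rw [E.tsum_eq F, hF.tsum_prod, tsum_fintype, Finset.mul_sum]
    refine Finset.sum_congr rfl fun j _ => ?_
    rw [hg2 j _ (hslit z hz j) s hs]
    simp only [F, tsum_mul_left, lerch]
    ring
  · intro z hz
    rw [Finset.mul_sum]
    refine Finset.sum_congr rfl fun j _ => ?_
    simp only [hg3 j _ (hslit z hz j), l, exp_eq_one_iff', cpow_neg_one]
    split_ifs
    · simp only [e]; ring
    · simp
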